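/- Let T be a triangulation of a surface, and for each triangle Δijk let α^i_{jk}, α^j_{ik}, α^k_{ij} be real numbers with α^i_{jk} + α^j_{ik} + α^k_{ij} = 0. Define the antisymmetric edge flow x by x_{ij} = (α^i_{jk} - α^j_{ik})/3 + (α^i_{jk'} - α^j_{ik'})/3 for an interior edge ij with adjacent triangles Δijk, Δijk', and x_{ij} = (α^i_{jk} - α^j_{ik})/3 for a boundary edge ij contained in triangle Δijk. Then for every interior vertex i, the divergence satisfies div(x)_i = Σ_{j ~ i} x_{ij} = Σ_{Δijk ∋ i} α^i_{jk}. -/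

import Mathlib

attribute [local instance] Classical.propDecidable

/-!
Exchanging the order of summation turns the divergence at `i` into a sum over the faces `f ∋ i`,
in which `f` contributes the average over its vertices `j` of `α i f - α j f`. This average is
`α i f` minus the mean of the errors of `f`, and the mean vanishes because the errors of `f` sum
to zero.
-/

section AngleErrorFlow

open Finset
open scoped BigOperators

variable {V M : Type*}

/-- The vertices adjacent to `i` in the complex with faces `F`: those other than `i` that share
a face with it. A finset built from `F`, so that `V` may be infinite. -/
noncomputable def faceNeighbors (F : Finset (Finset V)) (i : V) : Finset V :=
  ({f ∈ F | i ∈ f}.biUnion id).erase i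

theorem mem_faceNeighbors {F : Finset (Finset V)} {i j : V} :
    j ∈ faceNeighbors F i ↔ j ≠ i ∧ ∃ f ∈ F, i ∈ f ∧ j ∈ f := by
  simp [faceNeighbors, and_assoc]

theorem sum_faceNeighbors_comm [AddCommMonoid M] (F : Finset (Finset V)) (i : V)
    (g : V → Finset V → M) :
    ∑ j ∈ faceNeighbors F i, ∑ f ∈ F with i ∈ f ∧ j ∈ f, g j f =
      ∑ f ∈ F with i ∈ f, ∑ j ∈ f.erase i, g j f :=
  sum_comm' fun j f => by
    simp only [mem_faceNeighbors, mem_filter, mem_erase]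
    tauto

variable [AddCommGroup M] [Module ℚ≥0 M]

/-- The edge flow `x i j` induced by angle errors: every face `f` containing both `i` and `j`
contributes `(α i f - α j f) / #f`, where `α i f` is the error of `f` at its vertex `i`. The
divisor `#f` is the `3` of the triangulated case, and division is scalar multiplication in the
`ℚ≥0`-module of values. -/
noncomputable def angleErrorFlow (F : Finset (Finset V)) (α : V → Finset V → M) (i j : V) : M :=
  ∑ f ∈ F with i ∈ f ∧ j ∈ f, (#f : ℚ≥0)⁻¹ • (α i f - α j f)

theorem angleErrorFlow_eq_smul_sum_of_card_eq {F : Finset (Finset V)} {n : ℕ}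
    (hF : ∀ f ∈ F, #f = n) (α : V → Finset V → M) (i j : V) :
    angleErrorFlow F α i j = (n : ℚ≥0)⁻¹ • ∑ f ∈ F with i ∈ f ∧ j ∈ f, (α i f - α j f) := by
  rw [angleErrorFlow, smul_sum]
  exact sum_congr rfl fun f hf => by rw [hF f (mem_filter.1 hf).1]

theorem sum_erase_inv_card_smul_sub {s : Finset V} {i : V} (hi : i ∈ s) (a : V → M) :
    ∑ j ∈ s.erase i, (#s : ℚ≥0)⁻¹ • (a i - a j) = a i - 𝔼 j ∈ s, a j :=
  calc
    ∑ j ∈ s.erase i, (#s : ℚ≥0)⁻¹ • (a i - a j)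
      = ∑ j ∈ s, (#s : ℚ≥0)⁻¹ • (a i - a j) := sum_erase s (by rw [sub_self, smul_zero])
    _ = 𝔼 j ∈ s, (a i - a j) := (smul_sum ..).symm
    _ = a i - 𝔼 j ∈ s, a j := by rw [expect_sub_distrib, expect_const ⟨i, hi⟩]

theorem sum_angleErrorFlow_eq_sum_sub_expect (F : Finset (Finset V)) (α : V → Finset V → M)
    (i : V) :
    ∑ j ∈ faceNeighbors F i, angleErrorFlow F α i j =
      ∑ f ∈ F with i ∈ f, (α i f - 𝔼 j ∈ f, α j f) := by
  simp only [angleErrorFlow]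
  rw [sum_faceNeighbors_comm]
  exact sum_congr rfl fun f hf => sum_erase_inv_card_smul_sub (mem_filter.1 hf).2 (α · f)

theorem divergence_of_angle_error_flow_general (F : Finset (Finset V)) (α : V → Finset V → M)
    (hα : ∀ f ∈ F, ∑ j ∈ f, α j f = 0) (i : V) :
    ∑ j ∈ faceNeighbors F i, angleErrorFlow F α i j = ∑ f ∈ F with i ∈ f, α i f := by
  rw [sum_angleErrorFlow_eq_sum_sub_expect]
  refine sum_congr rfl fun f hf => ?_
  rw [expect, hα f (mem_filter.1 hf).1, smul_zero, sub_zero]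

end AngleErrorFlow

/-- Combinatorial divergence identity: let `F` be the set of faces (3-element vertex sets)
of a triangulation, with each edge contained in at most two faces, and for each face let
the numbers `α i f` (for `i ∈ f`) sum to zero. Define the antisymmetric edge flow
`x i j = (1/3) Σ_{f ⊇ {i,j}} (α i f - α j f)` (which agrees with
`(αⁱ_{jk} - αʲ_{ik})/3 + (αⁱ_{jk'} - αʲ_{ik'})/3` on interior edges and
`(αⁱ_{jk} - αʲ_{ik})/3` on boundary edges). Then at every interior vertex `i` (each edge
at `i` lies in exactly two faces), `div(x)_i = Σ_{j ~ i} x i j = Σ_{f ∋ i} α i f`. -/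
theorem divergence_of_angle_error_flow {V : Type*} [Fintype V]
    (F : Finset (Finset V)) (hF : ∀ f ∈ F, f.card = 3)
    (α : V → Finset V → ℝ)
    (hα : ∀ f ∈ F, ∑ i ∈ f, α i f = 0)
    (hedge : ∀ i j : V, i ≠ j → (F.filter (fun f => i ∈ f ∧ j ∈ f)).card ≤ 2)
    (x : V → V → ℝ)
    (hx : ∀ i j : V, x i j = (1 / 3) * ∑ f ∈ F.filter (fun f => i ∈ f ∧ j ∈ f),
        (α i f - α j f))
    (i : V)
    (hinterior : ∀ j : V, j ≠ i → (∃ f ∈ F, i ∈ f ∧ j ∈ f) →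
        (F.filter (fun f => i ∈ f ∧ j ∈ f)).card = 2) :
    ∑ j ∈ Finset.univ.filter (fun j => j ≠ i ∧ ∃ f ∈ F, i ∈ f ∧ j ∈ f), x i j
      = ∑ f ∈ F.filter (fun f => i ∈ f), α i f := by
  rw [← divergence_of_angle_error_flow_general F α hα i]
  exact Finset.sum_congr (by ext j; simp [mem_faceNeighbors]) fun j _ => by
    simp [hx, angleErrorFlow_eq_smul_sum_of_card_eq hF, NNRat.smul_def]
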